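/- Smoothness of curves into a Hilbert space is detected weakly: a curve c: ℝ → H into a Hilbert space H is smooth (infinitely Fréchet differentiable) if and only if for every h ∈ H the scalar function t ↦ ⟨h, c(t)⟩ is smooth. -/

import Mathlib

open scoped RealInnerProductSpace

/-!
A weakly differentiable curve has weakly convergent difference quotients. By the uniform
boundedness principle these quotients are norm bounded along every sequence of increments
tending to zero, so the curve is norm continuous (`continuousAt_of_weak_deriv`), and their weak
limits are bounded functionals, hence by Riesz representation are given by a curve `c'` in `H`
(`exists_weak_deriv`). The curve `c'` is again weakly smooth, so it is norm continuous and has a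
norm-differentiable primitive; testing against vectors identifies this primitive with `c` up to a
constant (`hasDerivAt_of_weak_deriv`). Thus `c` is differentiable with weakly smooth derivative,
and induction on the order of differentiability finishes the proof.
-/

open Filter Topology

section WeakDerivative

variable {H : Type*} [NormedAddCommGroup H] [InnerProductSpace ℝ H]

theorem inner_slope_eq_slope_inner (c : ℝ → H) (h : H) (t s : ℝ) :
    ⟪h, slope c t s⟫ = slope (fun r => ⟪h, c r⟫) t s := by
  simp [slope_def_module, inner_smul_right, inner_sub_right]

variable [CompleteSpace H]

/-- By the uniform boundedness principle, difference quotients that converge weakly are norm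
bounded along sequences, so weak differentiability at a point implies norm continuity there. -/
theorem continuousAt_of_weak_deriv {c : ℝ → H} {t : ℝ}
    (hc : ∀ h : H, DifferentiableAt ℝ (fun s => ⟪h, c s⟫) t) : ContinuousAt c t := by
  rw [continuousAt_iff_punctured_nhds]
  refine tendsto_of_seq_tendsto fun u hu => ?_
  have hbdd : ∀ h : H, ∃ C, ∀ n, ‖innerSL ℝ (slope c t (u n)) h‖ ≤ C := by
    intro h
    have hlim := (hasDerivAt_iff_tendsto_slope.1 (hc h).hasDerivAt).comp hu
    obtain ⟨C, hC⟩ := (Metric.isBounded_range_of_tendsto _ hlim).exists_norm_le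
    refine ⟨C, fun n => ?_⟩
    rw [innerSL_apply_apply, real_inner_comm, inner_slope_eq_slope_inner]
    exact hC _ ⟨n, rfl⟩
  obtain ⟨C, hC⟩ := banach_steinhaus hbdd
  have hu' : Tendsto (fun n => |u n - t| * C) atTop (𝓝 0) := by
    have := ((tendsto_nhds_of_tendsto_nhdsWithin hu).sub_const t).abs.mul_const C
    simpa using this
  rw [tendsto_iff_norm_sub_tendsto_zero]
  refine squeeze_zero (fun _ => norm_nonneg _) (fun n => ?_) hu'
  have hn := hC n
  rw [innerSL_apply_norm] at hn
  have hs : c (u n) - c t = (u n - t) • slope c t (u n) := (sub_smul_slope c t (u n)).symm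
  rw [Function.comp_apply, hs, norm_smul, Real.norm_eq_abs]
  gcongr

/-- The pointwise limit of the difference quotients, viewed as functionals, is continuous by
Banach–Steinhaus, hence is represented by a vector. -/
theorem exists_weak_deriv {c : ℝ → H} {t : ℝ}
    (hc : ∀ h : H, DifferentiableAt ℝ (fun s => ⟪h, c s⟫) t) :
    ∃ v : H, ∀ h : H, HasDerivAt (fun s => ⟪h, c s⟫) ⟪h, v⟫ t := by
  have hlim : Tendsto (fun s h => innerSL ℝ (slope c t s) h) (𝓝[≠] t)
      (𝓝 fun h => deriv (fun s => ⟪h, c s⟫) t) := by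
    refine tendsto_pi_nhds.2 fun h => ?_
    refine (hasDerivAt_iff_tendsto_slope.1 (hc h).hasDerivAt).congr fun s => ?_
    rw [innerSL_apply_apply, real_inner_comm, inner_slope_eq_slope_inner]
  refine ⟨(InnerProductSpace.toDual ℝ H).symm (continuousLinearMapOfTendsto _ hlim), fun h => ?_⟩
  rw [real_inner_comm, InnerProductSpace.toDual_symm_apply]
  exact (hc h).hasDerivAt

/-- A norm continuous weak derivative is a derivative in norm: its primitive has the same
coordinates as the curve, up to a constant. -/
theorem hasDerivAt_of_weak_deriv {c c' : ℝ → H}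
    (hc : ∀ t h, HasDerivAt (fun s => ⟪h, c s⟫) ⟪h, c' t⟫ t) (hc' : Continuous c') (t : ℝ) :
    HasDerivAt c (c' t) t := by
  set g : ℝ → H := fun t => ∫ s in (0 : ℝ)..t, c' s
  have hg : ∀ t, HasDerivAt g (c' t) t := fun t => (hc'.integral_hasStrictDerivAt 0 t).hasDerivAt
  have hcg : c = fun t => g t + (c 0 - g 0) := by
    funext t
    refine ext_inner_left ℝ fun h => ?_
    have hd : ∀ s, HasDerivAt (fun s => ⟪h, c s⟫ - ⟪h, g s⟫) 0 s := fun s => by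
      have hgi : HasDerivAt (fun r => ⟪h, g r⟫) ⟪h, c' s⟫ s :=
        (innerSL ℝ h).hasFDerivAt.comp_hasDerivAt s (hg s)
      have hsub := (hc s h).sub hgi
      rw [sub_self] at hsub
      exact hsub
    have := is_const_of_deriv_eq_zero (fun s => (hd s).differentiableAt)
      (fun s => (hd s).deriv) t 0
    rw [inner_add_right, inner_sub_right]
    linarith
  rw [hcg]
  exact (hg t).add_const _

theorem exists_weakly_smooth_deriv {c : ℝ → H}
    (hc : ∀ h : H, ContDiff ℝ (⊤ : ℕ∞) fun t => ⟪h, c t⟫) :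
    ∃ c' : ℝ → H, (∀ t, HasDerivAt c (c' t) t) ∧
      ∀ h : H, ContDiff ℝ (⊤ : ℕ∞) fun t => ⟪h, c' t⟫ := by
  choose c' hc' using fun t => exists_weak_deriv (c := c) (t := t)
    fun h => ((contDiff_infty_iff_deriv.1 (hc h)).1 t)
  have hsmooth : ∀ h : H, ContDiff ℝ (⊤ : ℕ∞) fun t => ⟪h, c' t⟫ := fun h => by
    have := (contDiff_infty_iff_deriv.1 (hc h)).2
    rwa [show deriv (fun t => ⟪h, c t⟫) = fun t => ⟪h, c' t⟫ from
      funext fun t => (hc' t h).deriv] at this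
  refine ⟨c', hasDerivAt_of_weak_deriv hc' ?_, hsmooth⟩
  exact continuous_iff_continuousAt.2 fun t => continuousAt_of_weak_deriv
    fun h => (contDiff_infty_iff_deriv.1 (hsmooth h)).1 t

end WeakDerivative

/-- Smoothness of curves into a Hilbert space is detected weakly: a curve `c : ℝ → H`
into a real Hilbert space `H` is smooth iff for every `h ∈ H` the scalar function
`t ↦ ⟪h, c t⟫` is smooth (Kriegl–Michor, Theorem 2.14). -/
theorem contDiff_curve_iff_weakly_smooth
    {H : Type*} [NormedAddCommGroup H] [InnerProductSpace ℝ H] [CompleteSpace H]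
    (c : ℝ → H) :
    ContDiff ℝ (⊤ : ℕ∞) c ↔ ∀ h : H, ContDiff ℝ (⊤ : ℕ∞) fun t => ⟪h, c t⟫ := by
  refine ⟨fun hc h => contDiff_const.inner ℝ hc, fun hc => ?_⟩
  rw [contDiff_infty]
  intro n
  induction n generalizing c with
  | zero =>
    obtain ⟨c', hd, -⟩ := exists_weakly_smooth_deriv hc
    exact contDiff_zero.2 (continuous_iff_continuousAt.2 fun t => (hd t).continuousAt)
  | succ n ih =>
    obtain ⟨c', hd, hc'⟩ := exists_weakly_smooth_deriv hc
    rw [Nat.cast_succ, contDiff_succ_iff_deriv]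
    refine ⟨fun t => (hd t).differentiableAt, fun hn => by simp at hn, ?_⟩
    rw [show deriv c = c' from funext fun t => (hd t).deriv]
    exact ih c' hc'
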